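/- Appendix Lemma (coercivity of the relative entropy in the difference variables): Assume ψ̂ ∈ C³(ℝ^{19} × (0,∞)) satisfies the growth conditions, that ∇²_ξ ψ̂(ξ,θ) is positive definite and ∂_θ η̂(ξ,θ) > 0 for all (ξ,θ), and let M, δ > 0. Then there exist R = R(M,δ) and constants K₁, K₂ > 0 such that for every (ξ,v,θ) ∈ ℝ^{19} × ℝ³ × (0,∞) with ξ = (F,ζ,w) and every (ξ̄,v̄,θ̄) ∈ Γ_{M,δ}: I(ξ,v,θ|ξ̄,v̄,θ̄) ≥ (K₁/4)(|ξ − ξ̄|_{p,q,r} + |θ − θ̄|^ℓ + |v − v̄|²) whenever |ξ|_{p,q,r} + θ^ℓ + |v|² > R, and I(ξ,v,θ|ξ̄,v̄,θ̄) ≥ K₂(|F − F̄|² + |ζ − ζ̄|² + |w − w̄|² + |θ − θ̄|² + |v − v̄|²) whenever |ξ|_{p,q,r} + θ^ℓ + |v|² ≤ R. -/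

import Mathlib

open Real MeasureTheory Filter Set Topology ENNReal NNReal

noncomputable section

abbrev Vec3 := Fin 3 → ℝ
abbrev Mat3 := Fin 3 → Fin 3 → ℝ
abbrev Xi := Mat3 × Mat3 × ℝ
abbrev Idx := (Fin 3 × Fin 3) ⊕ ((Fin 3 × Fin 3) ⊕ Unit)
abbrev FullState := Xi × Vec3 × ℝ

/-- Levi-Civita symbol on three indices. -/
def eps3 (i j k : Fin 3) : ℝ :=
  if (i, j, k) = (0, 1, 2) ∨ (i, j, k) = (1, 2, 0) ∨ (i, j, k) = (2, 0, 1) then 1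
  else if (i, j, k) = (2, 1, 0) ∨ (i, j, k) = (1, 0, 2) ∨ (i, j, k) = (0, 2, 1) then -1
  else 0

/-- Cofactor matrix (cof F)_{iα} = (1/2) ε_{ijk} ε_{αβγ} F_{jβ} F_{kγ}. -/
def cof3 (F : Mat3) : Mat3 := fun i α =>
  (1/2) * ∑ j, ∑ k, ∑ β, ∑ γ, eps3 i j k * eps3 α β γ * F j β * F k γ

/-- det F = (1/6) ε_{ijk} ε_{αβγ} F_{iα} F_{jβ} F_{kγ}. -/
def det3 (F : Mat3) : ℝ :=
  (1/6) * ∑ i, ∑ j, ∑ k, ∑ α, ∑ β, ∑ γ,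
    eps3 i j k * eps3 α β γ * F i α * F j β * F k γ

/-- The vector of null Lagrangians Φ(F) = (F, cof F, det F). -/
def Phi3 (F : Mat3) : Xi := (F, cof3 F, det3 F)

/-- Component ξ^B of ξ ∈ ℝ^19. -/
def xiComp (ξ : Xi) : Idx → ℝ
  | .inl (i, α) => ξ.1 i α
  | .inr (.inl (i, α)) => ξ.2.1 i α
  | .inr (.inr _) => ξ.2.2

def updMat (F : Mat3) (i α : Fin 3) (s : ℝ) : Mat3 :=
  Function.update F i (Function.update (F i) α s)

/-- Update component B of ξ to value s. -/
def xiUpd (ξ : Xi) : Idx → ℝ → Xi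
  | .inl (i, α), s => (updMat ξ.1 i α s, ξ.2)
  | .inr (.inl (i, α)), s => (ξ.1, updMat ξ.2.1 i α s, ξ.2.2)
  | .inr (.inr _), s => (ξ.1, ξ.2.1, s)

/-- ∂Φ^B/∂F_{iα}(F). -/
def dPhi (B : Idx) (i α : Fin 3) (F : Mat3) : ℝ :=
  deriv (fun s => xiComp (Phi3 (updMat F i α s)) B) (F i α)

/-- Partial derivative ∂ψ̂/∂ξ^B of a function ψ̂(ξ, θ). -/
def dXi (B : Idx) (ψ : Xi → ℝ → ℝ) (ξ : Xi) (θ : ℝ) : ℝ :=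
  deriv (fun s => ψ (xiUpd ξ B s) θ) (xiComp ξ B)

/-- Partial derivative ∂ψ̂/∂θ. -/
def dTh (ψ : Xi → ℝ → ℝ) (ξ : Xi) (θ : ℝ) : ℝ :=
  deriv (fun s => ψ ξ s) θ

/-- η̂(ξ,θ) = −∂_θ ψ̂(ξ,θ). -/
def etaHat (ψ : Xi → ℝ → ℝ) (ξ : Xi) (θ : ℝ) : ℝ := -(dTh ψ ξ θ)

/-- ê(ξ,θ) = ψ̂(ξ,θ) − θ ∂_θ ψ̂(ξ,θ). -/
def eHat (ψ : Xi → ℝ → ℝ) (ξ : Xi) (θ : ℝ) : ℝ := ψ ξ θ - θ * dTh ψ ξ θ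

/-- Spatial partial derivative ∂_α of a space-time field. -/
def pdx (α : Fin 3) (f : Vec3 → ℝ → ℝ) (x : Vec3) (t : ℝ) : ℝ :=
  deriv (fun s => f (Function.update x α s) t) (x α)

/-- Time derivative ∂_t of a space-time field. -/
def pdt (f : Vec3 → ℝ → ℝ) (x : Vec3) (t : ℝ) : ℝ :=
  deriv (fun s => f x s) t

def mnorm (F : Mat3) : ℝ := Real.sqrt (∑ i, ∑ j, (F i j)^2)
def vnorm (v : Vec3) : ℝ := Real.sqrt (∑ i, (v i)^2)

/-- |ξ|_{p,q,r} = |F|^p + |ζ|^q + |w|^r. -/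
def xiNorm (p q r : ℝ) (ξ : Xi) : ℝ :=
  mnorm ξ.1 ^ p + mnorm ξ.2.1 ^ q + |ξ.2.2| ^ r

/-- The compact set Γ_{M,δ}. -/
def Gamma (M δ : ℝ) : Set FullState :=
  {U | mnorm U.1.1 ≤ M ∧ mnorm U.1.2.1 ≤ M ∧ |U.1.2.2| ≤ M ∧
       vnorm U.2.1 ≤ M ∧ δ ≤ U.2.2 ∧ U.2.2 ≤ M}

/-- Relative free energy ψ̂(ξ,θ|ξ̄,θ̄). -/
def psiRel (ψ : Xi → ℝ → ℝ) (ξ : Xi) (θ : ℝ) (ξ' : Xi) (θ' : ℝ) : ℝ :=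
  ψ ξ θ - ψ ξ' θ' - (∑ B : Idx, dXi B ψ ξ' θ' * (xiComp ξ B - xiComp ξ' B))
    + etaHat ψ ξ' θ' * (θ - θ')

/-- Relative entropy function η̂(ξ,θ|ξ̄,θ̄). -/
def etaRel (ψ : Xi → ℝ → ℝ) (ξ : Xi) (θ : ℝ) (ξ' : Xi) (θ' : ℝ) : ℝ :=
  etaHat ψ ξ θ - etaHat ψ ξ' θ'
    - (∑ B : Idx, dXi B (etaHat ψ) ξ' θ' * (xiComp ξ B - xiComp ξ' B))
    - dTh (etaHat ψ) ξ' θ' * (θ - θ')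

/-- Relative stress (∂ψ̂/∂ξ^B)(ξ,θ|ξ̄,θ̄). -/
def dXiRel (B : Idx) (ψ : Xi → ℝ → ℝ) (ξ : Xi) (θ : ℝ) (ξ' : Xi) (θ' : ℝ) : ℝ :=
  dXi B ψ ξ θ - dXi B ψ ξ' θ'
    - (∑ A : Idx, dXi A (dXi B ψ) ξ' θ' * (xiComp ξ A - xiComp ξ' A))
    - dTh (dXi B ψ) ξ' θ' * (θ - θ')

/-- Relative entropy I(ξ,v,θ|ξ̄,v̄,θ̄). -/
def relEnt (ψ : Xi → ℝ → ℝ) (ξ : Xi) (v : Vec3) (θ : ℝ)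
    (ξ' : Xi) (v' : Vec3) (θ' : ℝ) : ℝ :=
  psiRel ψ ξ θ ξ' θ' + (1/2) * (∑ i, (v i - v' i)^2)
    + (etaHat ψ ξ θ - etaHat ψ ξ' θ') * (θ - θ')

/-- ψ̂ is C³ on ℝ^19 × (0,∞). -/
def PsiC3 (ψ : Xi → ℝ → ℝ) : Prop :=
  ContDiffOn ℝ 3 (fun p : Xi × ℝ => ψ p.1 p.2) (Set.univ ×ˢ Set.Ioi (0:ℝ))

/-- ∇²_ξ ψ̂ > 0 and ∂_θ η̂ > 0. -/
def PsiConvex (ψ : Xi → ℝ → ℝ) : Prop :=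
  ∀ ξ : Xi, ∀ θ : ℝ, 0 < θ →
    (∀ u : Idx → ℝ, u ≠ 0 →
      0 < ∑ A : Idx, ∑ B : Idx, dXi A (dXi B ψ) ξ θ * u A * u B) ∧
    0 < dTh (etaHat ψ) ξ θ

def gradFnorm (ψ : Xi → ℝ → ℝ) (ξ : Xi) (θ : ℝ) : ℝ :=
  Real.sqrt (∑ i, ∑ α, (dXi (.inl (i, α)) ψ ξ θ)^2)
def gradZnorm (ψ : Xi → ℝ → ℝ) (ξ : Xi) (θ : ℝ) : ℝ :=
  Real.sqrt (∑ i, ∑ α, (dXi (.inr (.inl (i, α))) ψ ξ θ)^2)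
def gradWnorm (ψ : Xi → ℝ → ℝ) (ξ : Xi) (θ : ℝ) : ℝ :=
  |dXi (.inr (.inr ())) ψ ξ θ|

/-- The growth conditions (gr.con.1)-(gr.con.3). -/
def GrowthCond (ψ : Xi → ℝ → ℝ) (c p q r ℓ : ℝ) : Prop :=
  0 < c ∧
  (∀ ξ : Xi, ∀ θ : ℝ, 0 < θ →
    c * (xiNorm p q r ξ + θ ^ ℓ) - c ≤ eHat ψ ξ θ ∧
    eHat ψ ξ θ ≤ c * (xiNorm p q r ξ + θ ^ ℓ) + c) ∧
  (∀ ε : ℝ, 0 < ε → ∃ R : ℝ, ∀ ξ : Xi, ∀ θ : ℝ, 0 < θ →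
    R < xiNorm p q r ξ + θ ^ ℓ →
    gradFnorm ψ ξ θ + gradZnorm ψ ξ θ ^ (p/(p-1)) + gradWnorm ψ ξ θ ^ (p/(p-2))
      ≤ ε * (xiNorm p q r ξ + θ ^ ℓ)) ∧
  (∀ ε : ℝ, 0 < ε → ∃ R : ℝ, ∀ ξ : Xi, ∀ θ : ℝ, 0 < θ →
    R < xiNorm p q r ξ + θ ^ ℓ →
    |dTh ψ ξ θ| ≤ ε * (xiNorm p q r ξ + θ ^ ℓ))

/-- The augmented thermoviscoelasticity system with fields (Z, Q, r), at a point (x,t). -/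
def AugSys (ψ : Xi → ℝ → ℝ) (ξf : Vec3 → ℝ → Xi) (vf : Vec3 → ℝ → Vec3)
    (θf : Vec3 → ℝ → ℝ) (Z : Vec3 → ℝ → Mat3) (Q : Vec3 → ℝ → Vec3)
    (r : Vec3 → ℝ → ℝ) (x : Vec3) (t : ℝ) : Prop :=
  (∀ B : Idx, pdt (fun y s => xiComp (ξf y s) B) x t
      = ∑ α, pdx α (fun y s => ∑ i, dPhi B i α (ξf y s).1 * vf y s i) x t) ∧
  (∀ i, pdt (fun y s => vf y s i) x t
      = ∑ α, pdx α (fun y s =>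
          ∑ B : Idx, dXi B ψ (ξf y s) (θf y s) * dPhi B i α (ξf y s).1) x t
        + ∑ α, pdx α (fun y s => Z y s i α) x t) ∧
  (pdt (fun y s => (1/2) * (∑ i, (vf y s i)^2) + eHat ψ (ξf y s) (θf y s)) x t
      = ∑ α, pdx α (fun y s => ∑ i,
          (∑ B : Idx, dXi B ψ (ξf y s) (θf y s) * dPhi B i α (ξf y s).1) * vf y s i) x t
        + ∑ α, pdx α (fun y s => ∑ i, Z y s i α * vf y s i) x t
        + ∑ α, pdx α (fun y s => Q y s α) x t + r x t) ∧
  (∀ i α β, pdx α (fun y s => (ξf y s).1 i β) x t = pdx β (fun y s => (ξf y s).1 i α) x t)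

/-- The entropy production identity for the augmented system. -/
def EntropyIdent (ψ : Xi → ℝ → ℝ) (ξf : Vec3 → ℝ → Xi) (vf : Vec3 → ℝ → Vec3)
    (θf : Vec3 → ℝ → ℝ) (Z : Vec3 → ℝ → Mat3) (Q : Vec3 → ℝ → Vec3)
    (r : Vec3 → ℝ → ℝ) (x : Vec3) (t : ℝ) : Prop :=
  pdt (fun y s => etaHat ψ (ξf y s) (θf y s)) x t
    - ∑ α, pdx α (fun y s => Q y s α / θf y s) x t
  = (∑ α, pdx α θf x t * Q x t α) / (θf x t)^2
    + (∑ α, ∑ i, pdx α (fun y s => vf y s i) x t * Z x t i α) / θf x t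
    + r x t / θf x t

/-- Newtonian viscous stress Z = μ ∇v. -/
def newtonianZ (μ : Mat3 → ℝ → ℝ) (ξf : Vec3 → ℝ → Xi) (vf : Vec3 → ℝ → Vec3)
    (θf : Vec3 → ℝ → ℝ) : Vec3 → ℝ → Mat3 :=
  fun x t i α => μ (ξf x t).1 (θf x t) * pdx α (fun y s => vf y s i) x t

/-- Fourier heat flux Q = k ∇θ. -/
def fourierQ (k : Mat3 → ℝ → ℝ) (ξf : Vec3 → ℝ → Xi)
    (θf : Vec3 → ℝ → ℝ) : Vec3 → ℝ → Vec3 :=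
  fun x t α => k (ξf x t).1 (θf x t) * pdx α θf x t

/-- The entropy identity for Newtonian viscosity and Fourier heat conduction (zero supply). -/
def EntropyIdentNF (ψ : Xi → ℝ → ℝ) (μ k : Mat3 → ℝ → ℝ) (ξf : Vec3 → ℝ → Xi)
    (vf : Vec3 → ℝ → Vec3) (θf : Vec3 → ℝ → ℝ) (x : Vec3) (t : ℝ) : Prop :=
  pdt (fun y s => etaHat ψ (ξf y s) (θf y s)) x t
    - ∑ α, pdx α (fun y s =>
        k (ξf y s).1 (θf y s) * pdx α θf y s / θf y s) x t
  = k (ξf x t).1 (θf x t) * (∑ α, (pdx α θf x t)^2) / (θf x t)^2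
    + μ (ξf x t).1 (θf x t) *
        (∑ α, ∑ i, (pdx α (fun y s => vf y s i) x t)^2) / θf x t

/-- Fundamental domain of the 3-torus. -/
def Box : Set Vec3 := Set.Icc 0 1

/-- Periodicity in the space variables with period 1. -/
def PeriodicX {E : Type*} (f : Vec3 → ℝ → E) : Prop :=
  ∀ (x : Vec3) (t : ℝ) (α : Fin 3), f (x + Pi.single α 1) t = f x t

/-- C^n regularity of a space-time field. -/
def FieldC {E : Type*} [NormedAddCommGroup E] [NormedSpace ℝ E]
    (n : ℕ) (f : Vec3 → ℝ → E) : Prop :=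
  ContDiff ℝ n (fun p : Vec3 × ℝ => f p.1 p.2)

/-- Spatial integral of the relative entropy at time t. -/
def relEntInt (ψ : Xi → ℝ → ℝ) (ξf : Vec3 → ℝ → Xi) (vf : Vec3 → ℝ → Vec3)
    (θf : Vec3 → ℝ → ℝ) (ξf' : Vec3 → ℝ → Xi) (vf' : Vec3 → ℝ → Vec3)
    (θf' : Vec3 → ℝ → ℝ) (t : ℝ) : ℝ :=
  ∫ x in Box, relEnt ψ (ξf x t) (vf x t) (θf x t) (ξf' x t) (vf' x t) (θf' x t)


/-- Spatial partial derivative of a static field. -/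
def pds (α : Fin 3) (f : Vec3 → ℝ) (x : Vec3) : ℝ :=
  deriv (fun s => f (Function.update x α s)) (x α)

/-- Deformation gradient ∇y of a static map y : ℝ³ → ℝ³. -/
def gradV (y : Vec3 → Vec3) (x : Vec3) : Mat3 :=
  fun i α => pds α (fun z => y z i) x

/-- ∂ψ/∂F_{iα} for ψ = ψ(F,θ). -/
def dFM (i α : Fin 3) (ψ : Mat3 → ℝ → ℝ) (F : Mat3) (θ : ℝ) : ℝ :=
  deriv (fun s => ψ (updMat F i α s) θ) (F i α)

/-- ∂ψ/∂θ for ψ = ψ(F,θ). -/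
def dThM (ψ : Mat3 → ℝ → ℝ) (F : Mat3) (θ : ℝ) : ℝ :=
  deriv (fun s => ψ F s) θ

/-- Index set for the full extended state U = (ξ, v, θ) ∈ ℝ²³. -/
abbrev UIdx := Idx ⊕ (Fin 3 ⊕ Unit)

def uComp (U : FullState) : UIdx → ℝ
  | .inl B => xiComp U.1 B
  | .inr (.inl i) => U.2.1 i
  | .inr (.inr _) => U.2.2

def uUpd (U : FullState) : UIdx → ℝ → FullState
  | .inl B, s => (xiUpd U.1 B s, U.2)
  | .inr (.inl i), s => (U.1, Function.update U.2.1 i s, U.2.2)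
  | .inr (.inr _), s => (U.1, U.2.1, s)

/-- Partial derivative in the state variables (ξ,v,θ). -/
def pdU (B : UIdx) (f : FullState → ℝ) (U : FullState) : ℝ :=
  deriv (fun s => f (uUpd U B s)) (uComp U B)

/-- Second partial derivative in the state variables (ξ,v,θ). -/
def pdU2 (A B : UIdx) (f : FullState → ℝ) (U : FullState) : ℝ :=
  pdU A (fun V => pdU B f V) U

/-- Test functions for the weak formulation on T³ × [0,T):
C¹, periodic in x, compactly supported in time in [0,T). -/
def TestFun (T : ℝ) (φ : Vec3 → ℝ → ℝ) : Prop :=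
  ContDiff ℝ 1 (fun p : Vec3 × ℝ => φ p.1 p.2) ∧ PeriodicX φ ∧
  ∃ T' : ℝ, T' < T ∧ ∀ (x : Vec3) (t : ℝ), T' ≤ t → φ x t = 0

/-- The elastic stress Σ_{iα} of the augmented constitutive theory. -/
def SigmaA (ψ : Xi → ℝ → ℝ) (ξ : Xi) (θ : ℝ) (i α : Fin 3) : ℝ :=
  ∑ B : Idx, dXi B ψ ξ θ * dPhi B i α ξ.1


/-! ### Coordinates -/

def xiE (B : Idx) : Xi := xiUpd 0 B 1

lemma xiUpd_eq (ξ : Xi) (B : Idx) (s : ℝ) :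
    xiUpd ξ B s = ξ + (s - xiComp ξ B) • xiE B := by
  rcases B with ⟨i, α⟩ | ⟨i, α⟩ | _
  · refine Prod.ext ?_ (Prod.ext ?_ ?_)
    · funext j β
      by_cases hj : j = i
      · subst hj
        by_cases hb : β = α
        · subst hb; simp [xiUpd, xiE, updMat, xiComp]
        · simp [xiUpd, xiE, updMat, xiComp, hb]
      · simp [xiUpd, xiE, updMat, xiComp, hj]
    · simp [xiUpd, xiE]
    · simp [xiUpd, xiE]
  · refine Prod.ext ?_ (Prod.ext ?_ ?_)
    · simp [xiUpd, xiE]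
    · funext j β
      by_cases hj : j = i
      · subst hj
        by_cases hb : β = α
        · subst hb; simp [xiUpd, xiE, updMat, xiComp]
        · simp [xiUpd, xiE, updMat, xiComp, hb]
      · simp [xiUpd, xiE, updMat, xiComp, hj]
    · simp [xiUpd, xiE]
  · refine Prod.ext ?_ (Prod.ext ?_ ?_) <;> simp [xiUpd, xiE, xiComp]

lemma xi_sum (h : Xi) : h = ∑ B : Idx, xiComp h B • xiE B := by
  have e1 : ∀ (a b : Fin 3) (F : Mat3), F a b
      = ∑ x : Fin 3 × Fin 3, F x.1 x.2 * (updMat 0 x.1 x.2 1 : Mat3) a b := by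
    intro a b F
    rw [Finset.sum_eq_single (a, b)]
    · simp [updMat]
    · rintro ⟨i, j⟩ - hne
      by_cases hi : a = i
      · subst hi
        have : b ≠ j := fun h => hne (by rw [h])
        simp [updMat, this]
      · simp [updMat, hi]
    · simp
  refine Prod.ext ?_ (Prod.ext ?_ ?_)
  · funext a b
    rw [e1 a b h.1]
    simp [Fintype.sum_sum_type, Prod.fst_sum, Finset.sum_apply, xiE, xiUpd, xiComp]
  · funext a b
    rw [e1 a b h.2.1]
    simp [Fintype.sum_sum_type, Prod.fst_sum, Prod.snd_sum, Finset.sum_apply, xiE, xiUpd, xiComp]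
  · simp [Fintype.sum_sum_type, Prod.snd_sum, xiE, xiUpd, xiComp]

def Om : Set (Xi × ℝ) := Set.univ ×ˢ Set.Ioi (0:ℝ)

lemma Om_open : IsOpen Om := isOpen_univ.prod isOpen_Ioi

lemma mem_Om {ξ : Xi} {θ : ℝ} (h : 0 < θ) : (ξ, θ) ∈ Om := ⟨trivial, h⟩

def unc (f : Xi → ℝ → ℝ) : Xi × ℝ → ℝ := fun p => f p.1 p.2

lemma diffAt {f : Xi → ℝ → ℝ} (hf : ContDiffOn ℝ 1 (unc f) Om) {ξ : Xi} {θ : ℝ} (h : 0 < θ) :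
    DifferentiableAt ℝ (unc f) (ξ, θ) :=
  (hf.differentiableOn one_ne_zero).differentiableAt (Om_open.mem_nhds (mem_Om h))

lemma line_deriv {f : Xi → ℝ → ℝ} (hf : ContDiffOn ℝ 1 (unc f) Om) (ξ h : Xi) (t : ℝ) {θ : ℝ}
    (hθ : 0 < θ) : HasDerivAt (fun s : ℝ => f (ξ + s • h) θ)
      (fderiv ℝ (unc f) (ξ + t • h, θ) (h, 0)) t := by
  have h1 : HasDerivAt (fun s : ℝ => ((ξ + s • h, θ) : Xi × ℝ)) (h, 0) t := by
    refine HasDerivAt.prodMk ?_ (hasDerivAt_const _ _)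
    simpa using ((hasDerivAt_id t).smul_const h).const_add ξ
  exact (diffAt hf (ξ := ξ + t • h) hθ).hasFDerivAt.comp_hasDerivAt t h1

lemma dXi_eq {f : Xi → ℝ → ℝ} (hf : ContDiffOn ℝ 1 (unc f) Om) (B : Idx) (ξ : Xi) {θ : ℝ}
    (hθ : 0 < θ) : dXi B f ξ θ = fderiv ℝ (unc f) (ξ, θ) (xiE B, 0) := by
  have h1 := line_deriv hf ξ (xiE B) (xiComp ξ B - xiComp ξ B) hθ
  have h2 := HasDerivAt.comp (h := fun x => id x - xiComp ξ B) (xiComp ξ B) h1 ((hasDerivAt_id (xiComp ξ B)).sub_const (xiComp ξ B))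
  unfold dXi
  simp only [xiUpd_eq]
  have h3 := h2.deriv
  simp only [sub_self, zero_smul, add_zero, mul_one] at h3
  exact h3

lemma dTh_hasDeriv {f : Xi → ℝ → ℝ} (hf : ContDiffOn ℝ 1 (unc f) Om) (ξ : Xi) {θ : ℝ}
    (hθ : 0 < θ) : HasDerivAt (fun s => f ξ s) (fderiv ℝ (unc f) (ξ, θ) (0, 1)) θ := by
  have h1 : HasDerivAt (fun s : ℝ => ((ξ, s) : Xi × ℝ)) (0, 1) θ :=
    HasDerivAt.prodMk (hasDerivAt_const _ _) (hasDerivAt_id θ)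
  exact (diffAt hf (ξ := ξ) hθ).hasFDerivAt.comp_hasDerivAt θ h1

lemma dTh_eq {f : Xi → ℝ → ℝ} (hf : ContDiffOn ℝ 1 (unc f) Om) (ξ : Xi) {θ : ℝ}
    (hθ : 0 < θ) : dTh f ξ θ = fderiv ℝ (unc f) (ξ, θ) (0, 1) :=
  (dTh_hasDeriv hf ξ hθ).deriv

lemma dTh_hasDeriv2 {f : Xi → ℝ → ℝ} (hf : ContDiffOn ℝ 1 (unc f) Om) (ξ : Xi) {θ : ℝ}
    (hθ : 0 < θ) : HasDerivAt (fun s => f ξ s) (dTh f ξ θ) θ := by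
  rw [dTh_eq hf ξ hθ]; exact dTh_hasDeriv hf ξ hθ

lemma line_deriv2 {f : Xi → ℝ → ℝ} (hf : ContDiffOn ℝ 1 (unc f) Om) (ξ h : Xi) (t : ℝ) {θ : ℝ}
    (hθ : 0 < θ) : HasDerivAt (fun s : ℝ => f (ξ + s • h) θ)
      (∑ B : Idx, dXi B f (ξ + t • h) θ * xiComp h B) t := by
  have e : ((h, 0) : Xi × ℝ) = ∑ B : Idx, xiComp h B • ((xiE B, 0) : Xi × ℝ) := by
    refine Prod.ext ?_ ?_
    · rw [Prod.fst_sum]; exact xi_sum h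
    · rw [Prod.snd_sum]; simp
  have h1 := line_deriv hf ξ h t hθ
  rw [e, map_sum] at h1
  convert h1 using 1
  refine Finset.sum_congr rfl fun B _ => ?_
  rw [dXi_eq hf B _ hθ, map_smul, smul_eq_mul, mul_comm]

lemma fderiv_app_smooth {f : Xi → ℝ → ℝ} {n : ℕ} (hf : ContDiffOn ℝ (n + 1) (unc f) Om)
    (e : Xi × ℝ) : ContDiffOn ℝ n (fun x => fderiv ℝ (unc f) x e) Om :=
  (hf.fderiv_of_isOpen Om_open le_rfl).clm_apply contDiffOn_const

lemma one_of {f : Xi → ℝ → ℝ} {n : ℕ} (hf : ContDiffOn ℝ (n + 1) (unc f) Om) :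
    ContDiffOn ℝ 1 (unc f) Om := hf.of_le (by simp)

lemma dXi_smooth {f : Xi → ℝ → ℝ} {n : ℕ} (hf : ContDiffOn ℝ (n + 1) (unc f) Om) (B : Idx) :
    ContDiffOn ℝ n (unc (dXi B f)) Om :=
  (fderiv_app_smooth hf (xiE B, 0)).congr fun x hx => dXi_eq (one_of hf) B x.1 hx.2

lemma dTh_smooth {f : Xi → ℝ → ℝ} {n : ℕ} (hf : ContDiffOn ℝ (n + 1) (unc f) Om) :
    ContDiffOn ℝ n (unc (dTh f)) Om :=
  (fderiv_app_smooth hf (0, 1)).congr fun x hx => dTh_eq (one_of hf) x.1 hx.2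

lemma eta_smooth {f : Xi → ℝ → ℝ} {n : ℕ} (hf : ContDiffOn ℝ (n + 1) (unc f) Om) :
    ContDiffOn ℝ n (unc (etaHat f)) Om := (dTh_smooth hf).neg

/-! ### Norm facts -/

lemma mnorm_nonneg (F : Mat3) : 0 ≤ mnorm F := Real.sqrt_nonneg _

lemma mnorm_sq (F : Mat3) : mnorm F ^ 2 = ∑ i, ∑ j, (F i j)^2 :=
  Real.sq_sqrt (Finset.sum_nonneg fun _ _ => Finset.sum_nonneg fun _ _ => sq_nonneg _)

lemma vnorm_sq (v : Vec3) : vnorm v ^ 2 = ∑ i, (v i)^2 :=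
  Real.sq_sqrt (Finset.sum_nonneg fun _ _ => sq_nonneg _)

lemma abs_le_mnorm (F : Mat3) (i j : Fin 3) : |F i j| ≤ mnorm F := by
  apply Real.abs_le_sqrt
  calc (F i j)^2 ≤ ∑ j, (F i j)^2 :=
        Finset.single_le_sum (f := fun j => (F i j)^2) (fun _ _ => sq_nonneg _) (Finset.mem_univ j)
    _ ≤ _ := Finset.single_le_sum (f := fun i => ∑ j, (F i j)^2)
        (fun _ _ => Finset.sum_nonneg fun _ _ => sq_nonneg _) (Finset.mem_univ i)

lemma norm_le_mnorm (F : Mat3) : ‖F‖ ≤ mnorm F := by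
  refine (pi_norm_le_iff_of_nonneg (mnorm_nonneg F)).2 fun i => ?_
  exact (pi_norm_le_iff_of_nonneg (mnorm_nonneg F)).2 fun j => abs_le_mnorm F i j

lemma xi_mem_ball {ξ : Xi} {b : ℝ} (h1 : mnorm ξ.1 ≤ b) (h2 : mnorm ξ.2.1 ≤ b) (h3 : |ξ.2.2| ≤ b) :
    ξ ∈ Metric.closedBall (0 : Xi) b := by
  rw [mem_closedBall_zero_iff]
  exact max_le ((norm_le_mnorm _).trans h1) (max_le ((norm_le_mnorm _).trans h2) h3)

lemma mnorm_sub_le (F G : Mat3) : mnorm (F - G) ≤ 2 * (mnorm F + mnorm G) := by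
  have h : mnorm (F - G) ^ 2 ≤ (2 * (mnorm F + mnorm G)) ^ 2 := by
    have h1 : mnorm (F - G) ^ 2 ≤ 2 * mnorm F ^ 2 + 2 * mnorm G ^ 2 := by
      rw [mnorm_sq, mnorm_sq, mnorm_sq]
      simp only [Finset.mul_sum, ← Finset.sum_add_distrib]
      refine Finset.sum_le_sum fun i _ => Finset.sum_le_sum fun j _ => ?_
      simp only [Pi.sub_apply]
      nlinarith [sq_nonneg (F i j + G i j)]
    nlinarith [mnorm_nonneg F, mnorm_nonneg G, mul_nonneg (mnorm_nonneg F) (mnorm_nonneg G)]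
  exact le_of_sq_le_sq h (by linarith [mnorm_nonneg F, mnorm_nonneg G])

lemma sum_xiComp_sq (ξ : Xi) : ∑ B : Idx, (xiComp ξ B)^2 = mnorm ξ.1 ^ 2 + mnorm ξ.2.1 ^ 2 + ξ.2.2 ^ 2 := by
  rw [mnorm_sq, mnorm_sq]
  simp [Fintype.sum_sum_type, Fintype.sum_prod_type, xiComp, add_assoc]

lemma sum_abs_xiComp (ξ : Xi) : ∑ B : Idx, |xiComp ξ B| ≤ 9 * mnorm ξ.1 + 9 * mnorm ξ.2.1 + |ξ.2.2| := by
  have h : ∀ F : Mat3, ∑ x : Fin 3 × Fin 3, |F x.1 x.2| ≤ 9 * mnorm F := by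
    intro F
    calc ∑ x : Fin 3 × Fin 3, |F x.1 x.2| ≤ ∑ x : Fin 3 × Fin 3, mnorm F :=
          Finset.sum_le_sum fun x _ => abs_le_mnorm F _ _
      _ = 9 * mnorm F := by simp
  have h1 := h ξ.1
  have h2 := h ξ.2.1
  simp only [Fintype.sum_sum_type, xiComp, Finset.univ_unique, Finset.sum_singleton]
  linarith

/-! ### Real power facts -/

lemma le_max_of_rpow {x p R : ℝ} (hx : 0 ≤ x) (hp : 1 < p) (h : x ^ p ≤ R) : x ≤ max 1 R := by
  rcases le_total x 1 with h1 | h1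
  · exact h1.trans (le_max_left _ _)
  · exact ((Real.self_le_rpow_of_one_le h1 hp.le).trans h).trans (le_max_right _ _)

lemma lin_le_rpow {p A ε : ℝ} (hp : 1 < p) (hA : 0 ≤ A) (hε : 0 < ε) :
    ∃ C : ℝ, 0 ≤ C ∧ ∀ x : ℝ, 0 ≤ x → A * x ≤ ε * x ^ p + C := by
  refine ⟨A * max 1 ((A / ε) ^ (1 / (p - 1))), by positivity, fun x hx => ?_⟩
  have hp0 : 0 < p - 1 := by linarith
  rcases le_total x ((A / ε) ^ (1 / (p - 1))) with h | h
  · have h1 : A * x ≤ A * max 1 ((A / ε) ^ (1 / (p - 1))) :=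
      mul_le_mul_of_nonneg_left (h.trans (le_max_right _ _)) hA
    have h2 : 0 ≤ ε * x ^ p := by positivity
    linarith
  · have h1 : A / ε ≤ x ^ (p - 1) := by
      have := Real.rpow_le_rpow (by positivity) h hp0.le
      rwa [← Real.rpow_mul (by positivity), one_div, inv_mul_cancel₀ hp0.ne', Real.rpow_one] at this
    have h2 : A ≤ ε * x ^ (p - 1) := by
      rw [div_le_iff₀ hε] at h1; linarith
    have h3 : x ^ p = x ^ (p - 1) * x := by
      rcases hx.eq_or_lt with h0 | h0
      · rw [← h0, Real.zero_rpow (by linarith)]; simp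
      · rw [← Real.rpow_add_one h0.ne']; congr 1; ring
    have h4 : A * x ≤ ε * x ^ p := by
      rw [h3, ← mul_assoc]; exact mul_le_mul_of_nonneg_right h2 hx
    have : 0 ≤ A * max 1 ((A / ε) ^ (1 / (p - 1))) := by positivity
    linarith

lemma diff_rpow_le {d a b M p : ℝ} (hp : 1 < p) (hd : 0 ≤ d) (ha : 0 ≤ a) (hb : 0 ≤ b) (hbM : b ≤ M)
    (h : d ≤ 2 * (a + b)) : d ^ p ≤ 4 ^ p * (a ^ p + M ^ p) := by
  have hM : 0 ≤ M := hb.trans hbM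
  have hp0 : 0 ≤ p := by linarith
  have h1 : d ≤ 4 * max a M := by
    have := le_max_left a M
    have := le_max_right a M
    linarith
  calc d ^ p ≤ (4 * max a M) ^ p := Real.rpow_le_rpow hd h1 hp0
    _ = 4 ^ p * (max a M) ^ p := Real.mul_rpow (by norm_num) (by positivity)
    _ ≤ 4 ^ p * (a ^ p + M ^ p) := by
      gcongr
      rcases max_cases a M with ⟨e, -⟩ | ⟨e, -⟩ <;> rw [e]
      · linarith [Real.rpow_nonneg hM p]
      · linarith [Real.rpow_nonneg ha p]

/-! ### Taylor in one variable -/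

lemma taylor_lower {h h' h'' : ℝ → ℝ} {lam : ℝ} (d1 : ∀ t, HasDerivAt h (h' t) t)
    (d2 : ∀ t, HasDerivAt h' (h'' t) t) (hb : ∀ t ∈ Set.Icc (0:ℝ) 1, lam ≤ h'' t) :
    lam / 2 ≤ h 1 - h 0 - h' 0 := by
  have e1 : ∀ t, HasDerivAt (fun t => h' t - lam * t) (h'' t - lam) t := fun t => by
    exact ((d2 t).sub ((hasDerivAt_id t).const_mul lam)).congr_deriv (by simp)
  have m1 : MonotoneOn (fun t => h' t - lam * t) (Set.Icc 0 1) := by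
    refine monotoneOn_of_deriv_nonneg (convex_Icc 0 1)
      (fun t _ => (e1 t).continuousAt.continuousWithinAt)
      (fun t _ => (e1 t).differentiableAt.differentiableWithinAt) fun t ht => ?_
    rw [(e1 t).deriv]
    linarith [hb t (interior_subset ht)]
  have e2 : ∀ t, HasDerivAt (fun t => h t - h' 0 * t - lam / 2 * t ^ 2) (h' t - h' 0 - lam * t) t :=
    fun t => by
      have := ((d1 t).sub ((hasDerivAt_id t).const_mul (h' 0))).sub
        (((hasDerivAt_id t).pow 2).const_mul (lam / 2))
      exact this.congr_deriv (by simp; ring)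
  have m2 : MonotoneOn (fun t => h t - h' 0 * t - lam / 2 * t ^ 2) (Set.Icc 0 1) := by
    refine monotoneOn_of_deriv_nonneg (convex_Icc 0 1)
      (fun t _ => (e2 t).continuousAt.continuousWithinAt)
      (fun t _ => (e2 t).differentiableAt.differentiableWithinAt) fun t ht => ?_
    rw [(e2 t).deriv]
    have ht' := interior_subset ht
    have := m1 (by simp) ht' ht'.1
    simp only [mul_zero, sub_zero] at this
    linarith
  have := m2 (by simp) (by simp) (zero_le_one (α := ℝ))
  simp only at this
  linarith

/-- Entropy part: lower bound in the temperature variable. -/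
lemma temp_lower {f e e' : ℝ → ℝ} {m δ b : ℝ} (hδ : 0 < δ) (hm : 0 < m)
    (d1 : ∀ t, 0 < t → HasDerivAt f (-e t) t) (d2 : ∀ t, 0 < t → HasDerivAt e (e' t) t)
    (hpos : ∀ t, 0 < t → 0 < e' t) (hb : ∀ t ∈ Set.Icc (δ / 2) b, m ≤ e' t)
    {s s' : ℝ} (hs : 0 < s) (hsb : s ≤ b) (hs' : δ ≤ s') (hs'b : s' ≤ b) :
    m / 8 * (s - s') ^ 2 ≤ f s - f s' + e s * (s - s') := by
  have g : ∀ k t : ℝ, 0 < t → HasDerivAt (fun t => f t + e t * (t - s') - k / 2 * (t - s') ^ 2)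
      ((e' t - k) * (t - s')) t := fun k t ht => by
    have := ((d1 t ht).add ((d2 t ht).mul ((hasDerivAt_id t).sub_const s'))).sub
        ((((hasDerivAt_id t).sub_const s').pow 2).const_mul (k / 2))
    exact this.congr_deriv (by simp; ring)
  have up : ∀ k x y : ℝ, 0 < x → s' ≤ x → x ≤ y → (∀ t ∈ Set.Icc x y, k ≤ e' t) →
      f x + e x * (x - s') - k / 2 * (x - s') ^ 2 ≤ f y + e y * (y - s') - k / 2 * (y - s') ^ 2 := by
    intro k x y hx hsx hxy hk
    have m1 : MonotoneOn (fun t => f t + e t * (t - s') - k / 2 * (t - s') ^ 2) (Set.Icc x y) := by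
      refine monotoneOn_of_deriv_nonneg (convex_Icc x y)
        (fun t ht => (g k t (hx.trans_le ht.1)).continuousAt.continuousWithinAt)
        (fun t ht => (g k t (hx.trans_le (interior_subset ht).1)).differentiableAt.differentiableWithinAt)
        fun t ht => ?_
      have ht := interior_subset ht
      rw [(g k t (hx.trans_le ht.1)).deriv]
      exact mul_nonneg (by linarith [hk t ht]) (by linarith [ht.1])
    exact m1 ⟨le_rfl, hxy⟩ ⟨hxy, le_rfl⟩ hxy
  have down : ∀ k x y : ℝ, 0 < x → y ≤ s' → x ≤ y → (∀ t ∈ Set.Icc x y, k ≤ e' t) →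
      f y + e y * (y - s') - k / 2 * (y - s') ^ 2 ≤ f x + e x * (x - s') - k / 2 * (x - s') ^ 2 := by
    intro k x y hx hsx hxy hk
    have m1 : AntitoneOn (fun t => f t + e t * (t - s') - k / 2 * (t - s') ^ 2) (Set.Icc x y) := by
      refine antitoneOn_of_deriv_nonpos (convex_Icc x y)
        (fun t ht => (g k t (hx.trans_le ht.1)).continuousAt.continuousWithinAt)
        (fun t ht => (g k t (hx.trans_le (interior_subset ht).1)).differentiableAt.differentiableWithinAt)
        fun t ht => ?_
      have ht := interior_subset ht
      rw [(g k t (hx.trans_le ht.1)).deriv]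
      exact mul_nonpos_of_nonneg_of_nonpos (by linarith [hk t ht]) (by linarith [ht.2])
    exact m1 ⟨le_rfl, hxy⟩ ⟨hxy, le_rfl⟩ hxy
  have hsq := sq_nonneg (s - s')
  rcases le_total s' s with h | h
  · have := up m s' s (hδ.trans_le hs') le_rfl h fun t ht =>
      hb t ⟨by linarith [ht.1], ht.2.trans hsb⟩
    simp only [sub_self, mul_zero, add_zero] at this
    nlinarith
  · rcases le_total (δ / 2) s with h2 | h2
    · have := down m s s' hs le_rfl h fun t ht => hb t ⟨h2.trans ht.1, ht.2.trans hs'b⟩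
      simp only [sub_self, mul_zero, add_zero] at this
      nlinarith
    · have a1 := down m (δ / 2) s' (by linarith) le_rfl (by linarith) fun t ht =>
        hb t ⟨ht.1, ht.2.trans hs'b⟩
      have a2 := down 0 s (δ / 2) hs (by linarith) h2 fun t ht => (hpos t (hs.trans_le ht.1)).le
      simp only [sub_self, mul_zero, add_zero] at a1
      have a3 : (s - s') ^ 2 ≤ 4 * (δ / 2 - s') ^ 2 := by nlinarith
      nlinarith

/-! ### Quadratic lower bounds -/

lemma xiComp_sub (ξ ξ' : Xi) (B : Idx) : xiComp (ξ - ξ') B = xiComp ξ B - xiComp ξ' B := by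
  rcases B with ⟨i, α⟩ | ⟨i, α⟩ | _ <;> simp [xiComp]

lemma hess_lower {ψ : Xi → ℝ → ℝ} (h3 : ContDiffOn ℝ 3 (unc ψ) Om) (hconv : PsiConvex ψ)
    (b M : ℝ) {δ : ℝ} (hδ : 0 < δ) : ∃ m : ℝ, 0 < m ∧ ∀ ξ ∈ Metric.closedBall (0 : Xi) b,
      ∀ θ ∈ Set.Icc δ M, ∀ u : Idx → ℝ,
        m * ∑ B, (u B) ^ 2 ≤ ∑ A : Idx, ∑ B : Idx, dXi A (dXi B ψ) ξ θ * u A * u B := by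
  have hc : ∀ A B, ContinuousOn (unc (dXi A (dXi B ψ))) Om := fun A B =>
    (dXi_smooth (n := 1) ((dXi_smooth (n := 2) (by exact_mod_cast h3) B).of_le (by norm_num)) A).continuousOn
  have hK : IsCompact ((Metric.closedBall (0 : Xi) b ×ˢ Set.Icc δ M) ×ˢ
      Metric.sphere (0 : Idx → ℝ) 1) :=
    ((isCompact_closedBall 0 b).prod isCompact_Icc).prod (isCompact_sphere 0 1)
  have hcont : ContinuousOn (fun x : (Xi × ℝ) × (Idx → ℝ) =>
      ∑ A : Idx, ∑ B : Idx, unc (dXi A (dXi B ψ)) x.1 * x.2 A * x.2 B)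
      ((Metric.closedBall (0 : Xi) b ×ˢ Set.Icc δ M) ×ˢ Metric.sphere (0 : Idx → ℝ) 1) := by
    refine continuousOn_finsetSum _ fun A _ => continuousOn_finsetSum _ fun B _ => ?_
    refine ContinuousOn.mul (ContinuousOn.mul ?_ (by fun_prop)) (by fun_prop)
    exact (hc A B).comp continuousOn_fst fun x hx => ⟨trivial, hδ.trans_le hx.1.2.1⟩
  obtain ⟨m, hm, hmb⟩ := hK.exists_forall_le' hcont (a := 0) (by
    rintro ⟨⟨ξ, θ⟩, u⟩ ⟨⟨-, h2⟩, h3⟩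
    refine (hconv ξ θ (hδ.trans_le h2.1)).1 u ?_
    rintro rfl
    simp at h3)
  refine ⟨m / 19, by positivity, fun ξ hξ θ hθ u => ?_⟩
  have hs : ∑ B, (u B) ^ 2 ≤ 19 * ‖u‖ ^ 2 := by
    calc ∑ B, (u B) ^ 2 ≤ ∑ B : Idx, ‖u‖ ^ 2 := Finset.sum_le_sum fun B _ => by
          rw [← sq_abs]
          exact pow_le_pow_left₀ (abs_nonneg _) (norm_le_pi_norm u B) 2
      _ = 19 * ‖u‖ ^ 2 := by simp
  have hq : m * ‖u‖ ^ 2 ≤ ∑ A : Idx, ∑ B : Idx, dXi A (dXi B ψ) ξ θ * u A * u B := by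
    by_cases hu : u = 0
    · subst hu; simp
    · have hn : 0 < ‖u‖ := norm_pos_iff.2 hu
      have := hmb ((ξ, θ), ‖u‖⁻¹ • u) ⟨⟨hξ, hθ⟩, by simp [norm_smul, hn.ne']⟩
      have e : (∑ A : Idx, ∑ B : Idx, unc (dXi A (dXi B ψ)) (ξ, θ) * (‖u‖⁻¹ • u) A * (‖u‖⁻¹ • u) B)
          = (∑ A : Idx, ∑ B : Idx, dXi A (dXi B ψ) ξ θ * u A * u B) * (‖u‖⁻¹) ^ 2 := by
        simp only [Finset.sum_mul]
        refine Finset.sum_congr rfl fun A _ => Finset.sum_congr rfl fun B _ => ?_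
        simp only [unc, Pi.smul_apply, smul_eq_mul]; ring
      simp only [e] at this
      rw [inv_pow, ← div_eq_mul_inv, le_div_iff₀ (by positivity)] at this
      exact this
  calc m / 19 * ∑ B, (u B) ^ 2 ≤ m / 19 * (19 * ‖u‖ ^ 2) := by gcongr
    _ = m * ‖u‖ ^ 2 := by ring
    _ ≤ _ := hq

lemma xi_lower {ψ : Xi → ℝ → ℝ} (h3 : ContDiffOn ℝ 3 (unc ψ) Om) (hconv : PsiConvex ψ)
    (b M : ℝ) {δ : ℝ} (hδ : 0 < δ) : ∃ m : ℝ, 0 < m ∧ ∀ ξ ∈ Metric.closedBall (0 : Xi) b,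
      ∀ ξ' ∈ Metric.closedBall (0 : Xi) b, ∀ θ ∈ Set.Icc δ M,
        m * ∑ B, (xiComp (ξ - ξ') B) ^ 2 ≤ ψ ξ θ - ψ ξ' θ
          - ∑ B : Idx, dXi B ψ ξ' θ * (xiComp ξ B - xiComp ξ' B) := by
  obtain ⟨m, hm, hmb⟩ := hess_lower h3 hconv b M hδ
  refine ⟨m / 2, by positivity, fun ξ hξ ξ' hξ' θ hθ => ?_⟩
  have hθ0 : 0 < θ := hδ.trans_le hθ.1
  have h1 : ContDiffOn ℝ 1 (unc ψ) Om := h3.of_le (by norm_num)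
  have h2 : ∀ B, ContDiffOn ℝ 1 (unc (dXi B ψ)) Om := fun B =>
    (dXi_smooth (n := 2) (by exact_mod_cast h3) B).of_le (by norm_num)
  have d1 := fun t => line_deriv2 h1 ξ' (ξ - ξ') t hθ0
  have d2 : ∀ t, HasDerivAt
      (fun t : ℝ => ∑ B : Idx, dXi B ψ (ξ' + t • (ξ - ξ')) θ * xiComp (ξ - ξ') B)
      (∑ B : Idx, (∑ A : Idx, dXi A (dXi B ψ) (ξ' + t • (ξ - ξ')) θ * xiComp (ξ - ξ') A)
        * xiComp (ξ - ξ') B) t := fun t =>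
    HasDerivAt.fun_sum fun B _ => (line_deriv2 (h2 B) ξ' (ξ - ξ') t hθ0).mul_const _
  have := taylor_lower (lam := m * ∑ B, (xiComp (ξ - ξ') B) ^ 2) d1 d2 (by
    intro t ht
    have hmem : ξ' + t • (ξ - ξ') ∈ Metric.closedBall (0 : Xi) b :=
      (convex_closedBall (0 : Xi) b).add_smul_sub_mem hξ' hξ ht
    refine (hmb _ hmem θ hθ (xiComp (ξ - ξ'))).trans (le_of_eq ?_)
    rw [Finset.sum_comm]
    simp only [Finset.sum_mul])
  simp only [one_smul, zero_smul, add_zero, add_sub_cancel, xiComp_sub] at this ⊢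
  linarith

lemma th_lower {ψ : Xi → ℝ → ℝ} (h3 : ContDiffOn ℝ 3 (unc ψ) Om) (hconv : PsiConvex ψ)
    (b : ℝ) {δ : ℝ} (hδ : 0 < δ) : ∃ m : ℝ, 0 < m ∧ ∀ ξ ∈ Metric.closedBall (0 : Xi) b,
      ∀ θ θ' : ℝ, 0 < θ → θ ≤ b → δ ≤ θ' → θ' ≤ b →
        m * (θ - θ') ^ 2 ≤ ψ ξ θ - ψ ξ θ' + etaHat ψ ξ θ * (θ - θ') := by
  have h1 : ContDiffOn ℝ 1 (unc ψ) Om := h3.of_le (by norm_num)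
  have he : ContDiffOn ℝ 2 (unc (etaHat ψ)) Om := eta_smooth (n := 2) (by exact_mod_cast h3)
  have he1 : ContDiffOn ℝ 1 (unc (etaHat ψ)) Om := he.of_le (by norm_num)
  have hee : ContinuousOn (unc (dTh (etaHat ψ))) Om :=
    (dTh_smooth (n := 1) (by exact_mod_cast he)).continuousOn
  have hK : IsCompact (Metric.closedBall (0 : Xi) b ×ˢ Set.Icc (δ / 2) b) :=
    (isCompact_closedBall 0 b).prod isCompact_Icc
  obtain ⟨m, hm, hmb⟩ := hK.exists_forall_le' (a := 0)
    (hee.mono fun x hx => ⟨trivial, (half_pos hδ).trans_le hx.2.1⟩)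
    (fun x hx => (hconv x.1 x.2 ((half_pos hδ).trans_le hx.2.1)).2)
  refine ⟨m / 8, by positivity, fun ξ hξ θ θ' hθ hθb hθ' hθ'b => ?_⟩
  refine temp_lower (f := fun s => ψ ξ s) (e := fun s => etaHat ψ ξ s)
    (e' := fun s => dTh (etaHat ψ) ξ s) hδ hm (fun t ht => ?_)
    (fun t ht => dTh_hasDeriv2 he1 ξ ht) (fun t ht => (hconv ξ t ht).2)
    (fun t ht => hmb (ξ, t) ⟨hξ, ht⟩) hθ hθb hθ' hθ'b
  simpa [etaHat] using dTh_hasDeriv2 h1 ξ ht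

lemma dTh_antitone {ψ : Xi → ℝ → ℝ} (h3 : ContDiffOn ℝ 3 (unc ψ) Om) (hconv : PsiConvex ψ)
    (ξ : Xi) {s t : ℝ} (hs : 0 < s) (hst : s ≤ t) : dTh ψ ξ t ≤ dTh ψ ξ s := by
  have he1 : ContDiffOn ℝ 1 (unc (etaHat ψ)) Om :=
    (eta_smooth (n := 2) (by exact_mod_cast h3)).of_le (by norm_num)
  have m1 : MonotoneOn (fun t => etaHat ψ ξ t) (Set.Ioi 0) := by
    refine monotoneOn_of_deriv_nonneg (convex_Ioi 0)
      (fun t ht => (dTh_hasDeriv2 he1 ξ ht).continuousAt.continuousWithinAt)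
      (fun t ht => (dTh_hasDeriv2 he1 ξ (interior_subset ht)).differentiableAt.differentiableWithinAt)
      fun t ht => ?_
    exact (hconv ξ t (interior_subset ht)).2.le
  have := m1 hs (hs.trans_le hst) hst
  simp only [etaHat] at this
  linarith

/-! ### Growth lower bound -/

lemma dTh_lower {ψ : Xi → ℝ → ℝ} {c p q r ℓ : ℝ} (h3 : ContDiffOn ℝ 3 (unc ψ) Om)
    (hconv : PsiConvex ψ) (hgrow : GrowthCond ψ c p q r ℓ)
    (hp : 4 ≤ p) (hq : 1 < q) (hr : 1 < r) (hl : 1 < ℓ) {ε : ℝ} (hε : 0 < ε) :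
    ∃ C : ℝ, 0 ≤ C ∧ ∀ ξ θ, 0 < θ → -(ε * (xiNorm p q r ξ + θ ^ ℓ)) - C ≤ dTh ψ ξ θ := by
  obtain ⟨R, hR⟩ := hgrow.2.2.2 ε hε
  have hd : ContinuousOn (unc (dTh ψ)) Om :=
    (dTh_smooth (n := 2) (by exact_mod_cast h3)).continuousOn
  have hb0 : (0:ℝ) < max 1 R := lt_of_lt_of_le one_pos (le_max_left _ _)
  have hK : IsCompact (Metric.closedBall (0 : Xi) (max 1 R) ×ˢ ({max 1 R} : Set ℝ)) :=
    (isCompact_closedBall 0 _).prod isCompact_singleton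
  obtain ⟨C, hC⟩ := hK.exists_bound_of_continuousOn
    (hd.mono fun x hx => ⟨trivial, by rw [Set.mem_singleton_iff.1 hx.2]; exact hb0⟩)
  refine ⟨max C 0, le_max_right _ _, fun ξ θ hθ => ?_⟩
  have n1 := Real.rpow_nonneg (mnorm_nonneg ξ.1) p
  have n2 := Real.rpow_nonneg (mnorm_nonneg ξ.2.1) q
  have n3 := Real.rpow_nonneg (abs_nonneg ξ.2.2) r
  have n4 := Real.rpow_nonneg hθ.le ℓ
  rcases lt_or_ge R (xiNorm p q r ξ + θ ^ ℓ) with h | h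
  · have := (abs_le.1 (hR ξ θ hθ h)).1
    linarith [le_max_right C 0]
  · unfold xiNorm at h ⊢
    have hmem : ξ ∈ Metric.closedBall (0 : Xi) (max 1 R) := xi_mem_ball
      (le_max_of_rpow (p := p) (mnorm_nonneg _) (by linarith) (by linarith))
      (le_max_of_rpow (p := q) (mnorm_nonneg _) hq (by linarith))
      (le_max_of_rpow (p := r) (abs_nonneg _) hr (by linarith))
    have hθb : θ ≤ max 1 R := le_max_of_rpow (p := ℓ) hθ.le hl (by linarith)
    have a1 := dTh_antitone h3 hconv ξ hθ hθb
    have a2 := (abs_le.1 (hC (ξ, max 1 R) ⟨hmem, rfl⟩)).1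
    simp only [unc] at a2
    have : 0 ≤ ε * (mnorm ξ.1 ^ p + mnorm ξ.2.1 ^ q + |ξ.2.2| ^ r + θ ^ ℓ) := by positivity
    linarith [le_max_left C 0]

lemma relEnt_eq (ψ : Xi → ℝ → ℝ) (ξ : Xi) (v : Vec3) (θ : ℝ) (ξ' : Xi) (v' : Vec3) (θ' : ℝ) :
    relEnt ψ ξ v θ ξ' v' θ' = eHat ψ ξ θ + θ' * dTh ψ ξ θ - ψ ξ' θ'
      - (∑ B : Idx, dXi B ψ ξ' θ' * (xiComp ξ B - xiComp ξ' B))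
      + (1/2) * (∑ i, (v i - v' i)^2) := by
  simp only [relEnt, psiRel, etaHat, eHat]; ring

lemma relEnt_eq2 (ψ : Xi → ℝ → ℝ) (ξ : Xi) (v : Vec3) (θ : ℝ) (ξ' : Xi) (v' : Vec3) (θ' : ℝ) :
    relEnt ψ ξ v θ ξ' v' θ' = (ψ ξ θ' - ψ ξ' θ'
      - (∑ B : Idx, dXi B ψ ξ' θ' * (xiComp ξ B - xiComp ξ' B)))
      + (ψ ξ θ - ψ ξ θ' + etaHat ψ ξ θ * (θ - θ'))
      + (1/2) * (∑ i, (v i - v' i)^2) := by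
  simp only [relEnt, psiRel]; ring

lemma lin_lower {ψ : Xi → ℝ → ℝ} {p q r : ℝ} (h3 : ContDiffOn ℝ 3 (unc ψ) Om)
    (hp : 4 ≤ p) (hq : 1 < q) (hr : 1 < r) {M δ : ℝ} (hδ : 0 < δ) {ε : ℝ} (hε : 0 < ε) :
    ∃ C : ℝ, 0 ≤ C ∧ ∀ ξ, ∀ ξ' ∈ Metric.closedBall (0 : Xi) M, ∀ θ' ∈ Set.Icc δ M,
      ψ ξ' θ' + (∑ B : Idx, dXi B ψ ξ' θ' * (xiComp ξ B - xiComp ξ' B))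
        ≤ ε * xiNorm p q r ξ + C := by
  have hK : IsCompact (Metric.closedBall (0 : Xi) M ×ˢ Set.Icc δ M) :=
    (isCompact_closedBall 0 _).prod isCompact_Icc
  have hsub : Metric.closedBall (0 : Xi) M ×ˢ Set.Icc δ M ⊆ Om :=
    fun x hx => ⟨trivial, hδ.trans_le hx.2.1⟩
  have hd : ∀ B, ContinuousOn (unc (dXi B ψ)) Om := fun B =>
    (dXi_smooth (n := 2) (by exact_mod_cast h3) B).continuousOn
  have hcg : ContinuousOn (fun x : Xi × ℝ => ∑ B, |unc (dXi B ψ) x|)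
      (Metric.closedBall (0 : Xi) M ×ˢ Set.Icc δ M) :=
    continuousOn_finsetSum _ fun B _ => ((hd B).mono hsub).abs
  have hcc : Continuous (fun x : Xi × ℝ => x.1) := continuous_fst
  have hx0 : ∀ B, Continuous (fun x : Xi => xiComp x B) := by
    rintro (⟨i, α⟩ | ⟨i, α⟩ | _) <;> simp only [xiComp] <;> fun_prop
  have hc0 : ContinuousOn (fun x : Xi × ℝ => unc ψ x - ∑ B, unc (dXi B ψ) x * xiComp x.1 B)
      (Metric.closedBall (0 : Xi) M ×ˢ Set.Icc δ M) := by
    refine (h3.continuousOn.mono hsub).sub (continuousOn_finsetSum _ fun B _ => ?_)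
    exact ((hd B).mono hsub).mul ((hx0 B).comp continuous_fst).continuousOn
  obtain ⟨G, hG⟩ := hK.exists_bound_of_continuousOn hcg
  obtain ⟨C0, hC0⟩ := hK.exists_bound_of_continuousOn hc0
  obtain ⟨C1, hC1, hb1⟩ := lin_le_rpow (p := p) (A := 9 * max G 0) (by linarith) (by positivity) hε
  obtain ⟨C2, hC2, hb2⟩ := lin_le_rpow (p := q) (A := 9 * max G 0) hq (by positivity) hε
  obtain ⟨C3, hC3, hb3⟩ := lin_le_rpow (p := r) (A := max G 0) hr (by positivity) hε
  refine ⟨max C0 0 + C1 + C2 + C3, by positivity, fun ξ ξ' hξ' θ' hθ' => ?_⟩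
  have a0 := (abs_le.1 (hC0 (ξ', θ') ⟨hξ', hθ'⟩)).2
  have a1 : ∀ B, |dXi B ψ ξ' θ'| ≤ max G 0 := fun B => by
    have := (abs_le.1 (hG (ξ', θ') ⟨hξ', hθ'⟩)).2
    simp only [unc] at this
    exact (Finset.single_le_sum (f := fun B => |dXi B ψ ξ' θ'|) (fun _ _ => abs_nonneg _)
      (Finset.mem_univ B)).trans (this.trans (le_max_left _ _))
  have a2 : ∑ B, dXi B ψ ξ' θ' * xiComp ξ B ≤ max G 0 * ∑ B, |xiComp ξ B| := by
    rw [Finset.mul_sum]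
    refine Finset.sum_le_sum fun B _ => (le_abs_self _).trans ?_
    rw [abs_mul]
    exact mul_le_mul_of_nonneg_right (a1 B) (abs_nonneg _)
  have a3 := mul_le_mul_of_nonneg_left (sum_abs_xiComp ξ) (le_max_right G 0)
  have b1 := hb1 _ (mnorm_nonneg ξ.1)
  have b2 := hb2 _ (mnorm_nonneg ξ.2.1)
  have b3 := hb3 _ (abs_nonneg ξ.2.2)
  simp only [unc] at a0
  simp only [mul_sub, Finset.sum_sub_distrib, xiNorm]
  have := le_max_left C0 0
  nlinarith

lemma sum_v {M : ℝ} (v v' : Vec3) (hM : vnorm v' ≤ M) :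
    vnorm v ^ 2 ≤ 2 * ∑ i, (v i - v' i) ^ 2 + 2 * M ^ 2 := by
  have h1 : vnorm v' ^ 2 ≤ M ^ 2 := pow_le_pow_left₀ (Real.sqrt_nonneg _) hM 2
  have h2 : vnorm v ^ 2 ≤ 2 * ∑ i, (v i - v' i) ^ 2 + 2 * vnorm v' ^ 2 := by
    rw [vnorm_sq, vnorm_sq]
    simp only [Finset.mul_sum, ← Finset.sum_add_distrib]
    refine Finset.sum_le_sum fun i _ => ?_
    nlinarith [sq_nonneg (v i - 2 * v' i)]
  linarith

lemma relEnt_growth {ψ : Xi → ℝ → ℝ} {c p q r ℓ : ℝ} (h3 : ContDiffOn ℝ 3 (unc ψ) Om)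
    (hconv : PsiConvex ψ) (hgrow : GrowthCond ψ c p q r ℓ)
    (hp : 4 ≤ p) (hq : 1 < q) (hr : 1 < r) (hl : 1 < ℓ) {M δ : ℝ} (hM : 0 < M) (hδ : 0 < δ) :
    ∃ C : ℝ, 0 ≤ C ∧ ∀ (ξ : Xi) (v : Vec3) (θ : ℝ), 0 < θ → ∀ U' ∈ Gamma M δ,
      c / 2 * (xiNorm p q r ξ + θ ^ ℓ) + (1/2) * (∑ i, (v i - U'.2.1 i)^2) - C
        ≤ relEnt ψ ξ v θ U'.1 U'.2.1 U'.2.2 := by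
  have hc := hgrow.1
  obtain ⟨C1, hC1, hb1⟩ := dTh_lower h3 hconv hgrow hp hq hr hl (ε := c / (4 * M)) (by positivity)
  obtain ⟨C2, hC2, hb2⟩ := lin_lower h3 hp hq hr (M := M) hδ (ε := c / 4) (by positivity)
  refine ⟨c + M * C1 + C2, by positivity, fun ξ v θ hθ U' hU => ?_⟩
  obtain ⟨u1, u2, u3, u4, u5, u6⟩ := hU
  rw [relEnt_eq]
  have n1 := Real.rpow_nonneg (mnorm_nonneg ξ.1) p
  have n2 := Real.rpow_nonneg (mnorm_nonneg ξ.2.1) q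
  have n3 := Real.rpow_nonneg (abs_nonneg ξ.2.2) r
  have n4 := Real.rpow_nonneg hθ.le ℓ
  have nx : 0 ≤ xiNorm p q r ξ := by unfold xiNorm; linarith
  have a1 := hb2 ξ U'.1 (xi_mem_ball u1 u2 u3) U'.2.2 ⟨u5, u6⟩
  have a2 := (hgrow.2.1 ξ θ hθ).1
  have a3 := hb1 ξ θ hθ
  have hθ' : 0 ≤ U'.2.2 := hδ.le.trans u5
  have a4 := mul_le_mul_of_nonneg_left a3 hθ'
  have a5 : U'.2.2 * (c / (4 * M) * (xiNorm p q r ξ + θ ^ ℓ) + C1)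
      ≤ M * (c / (4 * M) * (xiNorm p q r ξ + θ ^ ℓ) + C1) :=
    mul_le_mul_of_nonneg_right u6 (by positivity)
  have a6 : M * (c / (4 * M) * (xiNorm p q r ξ + θ ^ ℓ) + C1)
      = c / 4 * (xiNorm p q r ξ + θ ^ ℓ) + M * C1 := by field_simp
  have a7 : 0 ≤ c / 4 * θ ^ ℓ := by positivity
  nlinarith

/-- Appendix Lemma A.2(3), coercivity of the relative entropy
in the difference variables. -/
theorem coercivity_relative_entropy_differences
    (ψ : Xi → ℝ → ℝ) (c p q r ℓ : ℝ)
    (hψ3 : PsiC3 ψ) (hconv : PsiConvex ψ)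
    (hgrow : GrowthCond ψ c p q r ℓ)
    (hp : 4 ≤ p) (hq : 1 < q) (hr : 1 < r) (hl : 1 < ℓ)
    (M δ : ℝ) (hM : 0 < M) (hδ : 0 < δ) :
    ∃ R K₁ K₂ : ℝ, 0 < K₁ ∧ 0 < K₂ ∧
      ∀ (ξ : Xi) (v : Vec3) (θ : ℝ), 0 < θ → ∀ U' ∈ Gamma M δ,
        (R < xiNorm p q r ξ + θ ^ ℓ + (vnorm v)^2 →
          K₁ / 4 * (mnorm (ξ.1 - U'.1.1) ^ p + mnorm (ξ.2.1 - U'.1.2.1) ^ q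
              + |ξ.2.2 - U'.1.2.2| ^ r + |θ - U'.2.2| ^ ℓ
              + ∑ i, (v i - U'.2.1 i)^2)
            ≤ relEnt ψ ξ v θ U'.1 U'.2.1 U'.2.2) ∧
        (xiNorm p q r ξ + θ ^ ℓ + (vnorm v)^2 ≤ R →
          K₂ * (mnorm (ξ.1 - U'.1.1)^2 + mnorm (ξ.2.1 - U'.1.2.1)^2
              + (ξ.2.2 - U'.1.2.2)^2 + (θ - U'.2.2)^2
              + ∑ i, (v i - U'.2.1 i)^2)
            ≤ relEnt ψ ξ v θ U'.1 U'.2.1 U'.2.2) := by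
  have h3 : ContDiffOn ℝ 3 (unc ψ) Om := hψ3
  have hc := hgrow.1
  obtain ⟨C, hC, hbase⟩ := relEnt_growth h3 hconv hgrow hp hq hr hl hM hδ
  have hp1 : 1 < p := by linarith
  obtain ⟨A, hA⟩ : ∃ A : ℝ, A = 4 ^ p + 4 ^ q + 4 ^ r + 4 ^ ℓ := ⟨_, rfl⟩
  obtain ⟨S, hS⟩ : ∃ S : ℝ, S = M ^ p + M ^ q + M ^ r + M ^ ℓ := ⟨_, rfl⟩
  have k1 : (0:ℝ) < 4 ^ p := by positivity
  have k2 : (0:ℝ) < 4 ^ q := by positivity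
  have k3 : (0:ℝ) < 4 ^ r := by positivity
  have k4 : (0:ℝ) < 4 ^ ℓ := by positivity
  have s1 : (0:ℝ) < M ^ p := by positivity
  have s2 : (0:ℝ) < M ^ q := by positivity
  have s3 : (0:ℝ) < M ^ r := by positivity
  have s4 : (0:ℝ) < M ^ ℓ := by positivity
  have hA0 : 0 < A := by linarith
  have hS0 : 0 < S := by linarith
  obtain ⟨κ, hκ⟩ : ∃ κ : ℝ, κ = min (c / (4 * A)) (1 / 4) := ⟨_, rfl⟩
  have hκ0 : 0 < κ := by rw [hκ]; positivity
  have hκ1 : κ * A ≤ c / 4 := by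
    have : κ ≤ c / (4 * A) := hκ ▸ min_le_left _ _
    calc κ * A ≤ c / (4 * A) * A := by gcongr
      _ = c / 4 := by field_simp
  have hκ2 : κ ≤ 1 / 4 := hκ ▸ min_le_right _ _
  obtain ⟨ρ, hρ⟩ : ∃ ρ : ℝ, ρ = min (c / 4) (1 / 8) := ⟨_, rfl⟩
  have hρ0 : 0 < ρ := by rw [hρ]; positivity
  have hρ1 : ρ ≤ c / 4 := hρ ▸ min_le_left _ _
  have hρ2 : ρ ≤ 1 / 8 := hρ ▸ min_le_right _ _
  obtain ⟨R, hR⟩ : ∃ R : ℝ, R = (C + c / 4 * S + C + c / 2 * S + M ^ 2 / 4 ) / ρ := ⟨_, rfl⟩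
  obtain ⟨b, hb⟩ : ∃ b : ℝ, b = max (max 1 R) M := ⟨_, rfl⟩
  have hbR : max 1 R ≤ b := hb ▸ le_max_left _ _
  have hbM : M ≤ b := hb ▸ le_max_right _ _
  obtain ⟨m1, hm1, hx⟩ := xi_lower h3 hconv b M hδ
  obtain ⟨m2, hm2, ht⟩ := th_lower h3 hconv b hδ
  refine ⟨R, 4 * κ, min (min m1 m2) (1 / 2), by positivity, by positivity,
    fun ξ v θ hθ U' hU => ⟨fun hfar => ?_, fun hnear => ?_⟩⟩
  · have hb1 := hbase ξ v θ hθ U' hU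
    obtain ⟨u1, u2, u3, u4, u5, u6⟩ := hU
    have hθ' : 0 ≤ U'.2.2 := hδ.le.trans u5
    have n1 := Real.rpow_nonneg (mnorm_nonneg ξ.1) p
    have n2 := Real.rpow_nonneg (mnorm_nonneg ξ.2.1) q
    have n3 := Real.rpow_nonneg (abs_nonneg ξ.2.2) r
    have n4 := Real.rpow_nonneg hθ.le ℓ
    have d1 := diff_rpow_le hp1 (mnorm_nonneg _) (mnorm_nonneg _) (mnorm_nonneg _) u1
      (mnorm_sub_le ξ.1 U'.1.1)
    have d2 := diff_rpow_le hq (mnorm_nonneg _) (mnorm_nonneg _) (mnorm_nonneg _) u2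
      (mnorm_sub_le ξ.2.1 U'.1.2.1)
    have d3 := diff_rpow_le hr (abs_nonneg _) (abs_nonneg _) (abs_nonneg _) u3
      (show |ξ.2.2 - U'.1.2.2| ≤ 2 * (|ξ.2.2| + |U'.1.2.2|) by
        linarith [abs_sub ξ.2.2 U'.1.2.2, abs_nonneg ξ.2.2, abs_nonneg U'.1.2.2])
    have d4 := diff_rpow_le hl (abs_nonneg _) hθ.le hθ' u6
      (show |θ - U'.2.2| ≤ 2 * (θ + U'.2.2) by rw [abs_le]; constructor <;> linarith)
    have e : ∀ {k a : ℝ}, k ≤ A → 0 ≤ a → k * a ≤ A * a := fun h h' =>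
      mul_le_mul_of_nonneg_right h h'
    have d1' := d1.trans (e (a := mnorm ξ.1 ^ p + M ^ p) (by linarith) (by linarith))
    have d2' := d2.trans (e (a := mnorm ξ.2.1 ^ q + M ^ q) (by linarith) (by linarith))
    have d3' := d3.trans (e (a := |ξ.2.2| ^ r + M ^ r) (by linarith) (by linarith))
    have d4' := d4.trans (e (a := θ ^ ℓ + M ^ ℓ) (by linarith) (by linarith))
    obtain ⟨N, hN⟩ : ∃ N : ℝ, N = xiNorm p q r ξ + θ ^ ℓ := ⟨_, rfl⟩
    obtain ⟨V, hV⟩ : ∃ V : ℝ, V = ∑ i, (v i - U'.2.1 i)^2 := ⟨_, rfl⟩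
    have hV0 : 0 ≤ V := hV ▸ Finset.sum_nonneg fun _ _ => sq_nonneg _
    have hN' : N = mnorm ξ.1 ^ p + mnorm ξ.2.1 ^ q + |ξ.2.2| ^ r + θ ^ ℓ := by rw [hN]; rfl
    have hN0 : 0 ≤ N := by linarith
    have hv := sum_v v U'.2.1 u4
    rw [← hV] at hv hb1 ⊢
    rw [← hN] at hfar hb1
    rw [hR, div_lt_iff₀ hρ0] at hfar
    have hD : mnorm (ξ.1 - U'.1.1) ^ p + mnorm (ξ.2.1 - U'.1.2.1) ^ q
              + |ξ.2.2 - U'.1.2.2| ^ r + |θ - U'.2.2| ^ ℓ ≤ A * (N + S) := by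
      rw [hN', hS]; linarith
    have f1 : κ * (mnorm (ξ.1 - U'.1.1) ^ p + mnorm (ξ.2.1 - U'.1.2.1) ^ q
              + |ξ.2.2 - U'.1.2.2| ^ r + |θ - U'.2.2| ^ ℓ + V) ≤ κ * (A * (N + S) + V) := by
      gcongr
    have f2 : κ * A * (N + S) ≤ c / 4 * (N + S) := by gcongr
    have f3 : κ * V ≤ 1 / 4 * V := by gcongr
    have f4 : ρ * N ≤ c / 4 * N := by gcongr
    have f5 : ρ * vnorm v ^ 2 ≤ 1 / 8 * vnorm v ^ 2 := by gcongr
    have f6 : 0 < c * S := by positivity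
    have e4 : 4 * κ / 4 = κ := by ring
    rw [e4]
    have f7 : κ * (A * (N + S) + V) = κ * A * (N + S) + κ * V := by ring
    refine f1.trans ?_
    rw [f7]
    clear d1 d2 d3 d4 d1' d2' d3' d4' hD f1 f7 hκ hρ hA hS hN hN' hb
    linarith
  · obtain ⟨u1, u2, u3, u4, u5, u6⟩ := hU
    have n1 := Real.rpow_nonneg (mnorm_nonneg ξ.1) p
    have n2 := Real.rpow_nonneg (mnorm_nonneg ξ.2.1) q
    have n3 := Real.rpow_nonneg (abs_nonneg ξ.2.2) r
    have n4 := Real.rpow_nonneg hθ.le ℓ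
    have n5 := sq_nonneg (vnorm v)
    unfold xiNorm at hnear
    have hmem : ξ ∈ Metric.closedBall (0 : Xi) b := xi_mem_ball
      ((le_max_of_rpow (p := p) (mnorm_nonneg _) hp1 (by linarith)).trans hbR)
      ((le_max_of_rpow (p := q) (mnorm_nonneg _) hq (by linarith)).trans hbR)
      ((le_max_of_rpow (p := r) (abs_nonneg _) hr (by linarith)).trans hbR)
    have hθb : θ ≤ b := (le_max_of_rpow (p := ℓ) hθ.le hl (by linarith)).trans hbR
    have hmem' : U'.1 ∈ Metric.closedBall (0 : Xi) b :=
      xi_mem_ball (u1.trans hbM) (u2.trans hbM) (u3.trans hbM)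
    have a1 := hx ξ hmem U'.1 hmem' U'.2.2 ⟨u5, u6⟩
    have a2 := ht ξ hmem θ U'.2.2 hθ hθb u5 (u6.trans hbM)
    rw [sum_xiComp_sq] at a1
    rw [relEnt_eq2]
    obtain ⟨K, hK⟩ : ∃ K : ℝ, K = min (min m1 m2) (1 / 2) := ⟨_, rfl⟩
    have K1 : K ≤ m1 := hK ▸ (min_le_left _ _).trans (min_le_left _ _)
    have K2 : K ≤ m2 := hK ▸ (min_le_left _ _).trans (min_le_right _ _)
    have K3 : K ≤ 1 / 2 := hK ▸ min_le_right _ _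
    rw [← hK]
    have hV0 : 0 ≤ ∑ i, (v i - U'.2.1 i)^2 := Finset.sum_nonneg fun _ _ => sq_nonneg _
    have g1 := mul_le_mul_of_nonneg_right K1
      (show 0 ≤ mnorm (ξ - U'.1).1 ^ 2 + mnorm (ξ - U'.1).2.1 ^ 2 + (ξ - U'.1).2.2 ^ 2 by positivity)
    have g2 := mul_le_mul_of_nonneg_right K2 (sq_nonneg (θ - U'.2.2))
    have g3 := mul_le_mul_of_nonneg_right K3 hV0
    simp only [Prod.fst_sub, Prod.snd_sub] at a1 g1
    linarith

end
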